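/- arXiv:1907.09329 — 4 statements merged into one kernel-verified Lean document; each statement's English description precedes it below -/
import Mathlib

section
/- Let c ∈ ℝ, k₋, k₊ > 0, θ₋, θ₊ ∈ ℝ. Let f : ℝ → ℝ be a C⁵ function satisfying -c f'(ξ) + f(ξ) f'(ξ) + f⁽⁵⁾(ξ) = 0 for all ξ ∈ ℝ, and let φ₋, φ₊ : ℝ → ℝ be 2π-periodic C⁴ functions such that for each j = 0,1,2,3, the difference f⁽ʲ⁾(ξ) − (d/dξ)ʲ[φ₋(k₋ξ − θ₋)] tends to 0 as ξ → −∞ and f⁽ʲ⁾(ξ) − (d/dξ)ʲ[φ₊(k₊ξ − θ₊)] tends to 0 as ξ → +∞. Denote by ū± the period average of φ±, by P²± that of φ±², by P³± that of φ±³, and by Q± that of (φ±'')². Then the Rankine–Hugoniot relations hold with shock speed V = c: (i) −c(ū₋ − ū₊) + (1/2)(P²₋ − P²₊) = 0; (ii) −(c/2)(P²₋ − P²₊) + (1/3)(P³₋ − P³₊) + (5/2)(k₋⁴ Q₋ − k₊⁴ Q₊) = 0; (iii) −c(k₋ − k₊) + (c k₋ − c k₊) = 0. -/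
/-!
The profile equation has two first integrals on all of `ℝ`,
`f⁗ - c f + f² / 2 = A` and `-c f² / 2 + f³ / 3 + f f⁗ - f' f''' + f''² / 2 = B`.
Both can be rewritten with an exact derivative equal to a constant minus a density:
`(f''')' = A - (-c f + f² / 2)` and
`(f f''' - 2 f' f'')' = B - (-c f² / 2 + f³ / 3 + (5/2) f''²)`.
Integrating over a window of one period that is pushed to `±∞`, the exact derivative contributes
nothing in the limit, because the differentiated quantity is asymptotically periodic, while the
density contributes its mean over the limiting periodic wave (`AsympPeriodic.const_eq_mean`).
Hence `A` and `B` equal the period averages of the densities at either end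
(`averages_of_farField`), so these averages agree at `-∞` and `+∞`; this is the jump condition.
Relation (iii) is a ring identity.
-/

open Filter Topology

/-- The function `a` approaches the continuous `T`-periodic function `p` along `l`. -/
structure AsympPeriodic (T : ℝ) (l : Filter ℝ) (a p : ℝ → ℝ) : Prop where
  cont : Continuous p
  periodic : Function.Periodic p T
  tendsto : Tendsto (fun x => a x - p x) l (𝓝 0)

namespace AsympPeriodic

variable {T : ℝ} {l : Filter ℝ} {a b p q : ℝ → ℝ}

lemma add (ha : AsympPeriodic T l a p) (hb : AsympPeriodic T l b q) :
    AsympPeriodic T l (fun x => a x + b x) (fun x => p x + q x) where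
  cont := ha.cont.add hb.cont
  periodic := fun x => by simp only [ha.periodic x, hb.periodic x]
  tendsto := by
    have h := ha.tendsto.add hb.tendsto
    rw [add_zero] at h
    exact h.congr fun x => by ring

lemma const_mul (r : ℝ) (ha : AsympPeriodic T l a p) :
    AsympPeriodic T l (fun x => r * a x) (fun x => r * p x) where
  cont := continuous_const.mul ha.cont
  periodic := fun x => by simp only [ha.periodic x]
  tendsto := by
    have h := ha.tendsto.const_mul r
    rw [mul_zero] at h
    exact h.congr fun x => by ring

lemma mul (hT : T ≠ 0) (ha : AsympPeriodic T l a p) (hb : AsympPeriodic T l b q) :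
    AsympPeriodic T l (fun x => a x * b x) (fun x => p x * q x) where
  cont := ha.cont.mul hb.cont
  periodic := fun x => by simp only [ha.periodic x, hb.periodic x]
  tendsto := by
    have bdd : ∀ {r : ℝ → ℝ}, Continuous r → Function.Periodic r T →
        IsBoundedUnder (· ≤ ·) l (norm ∘ r) := by
      intro r hc hp
      obtain ⟨M, hM⟩ := (hp.isBounded_of_continuous hT hc).exists_norm_le
      exact isBoundedUnder_of ⟨M, fun x => hM _ ⟨x, rfl⟩⟩
    have h1 := ha.tendsto.mul hb.tendsto
    have h2 := ha.tendsto.zero_mul_isBoundedUnder_le (bdd hb.cont hb.periodic)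
    have h3 := hb.tendsto.zero_mul_isBoundedUnder_le (bdd ha.cont ha.periodic)
    have h := (h1.add h2).add h3
    simp only [mul_zero, add_zero] at h
    exact h.congr fun x => by ring

/-- If `H' = C - g`, where both `H` and `g` are asymptotically periodic with period `T`, then
`C` is the mean of the periodic limit of `g`. The hypothesis `hl` says that windows of length `T`
starting at `L` escape along `l` as `L` does; it holds for `atTop` and `atBot`. -/
lemma const_eq_mean {H P g : ℝ → ℝ} {C : ℝ} [l.NeBot] (hT : 0 < T)
    (hl : ∀ s ∈ l, ∀ᶠ L in l, Set.Icc L (L + T) ⊆ s)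
    (hH : AsympPeriodic T l H P) (hg : AsympPeriodic T l g p) (hgc : Continuous g)
    (hder : ∀ x, HasDerivAt H (C - g x) x) :
    C * T = ∫ x in (0 : ℝ)..T, p x := by
  have hshift : Tendsto (fun L => L + T) l l := fun s hs =>
    (hl s hs).mono fun L hL => hL ⟨by linarith, le_rfl⟩
  have hbdry : Tendsto (fun L => H (L + T) - H L) l (𝓝 0) := by
    have h := (hH.tendsto.comp hshift).sub hH.tendsto
    rw [sub_zero] at h
    refine h.congr fun L => ?_
    simp only [Function.comp_apply, hH.periodic L]
    ring
  have hint : Tendsto (fun L => ∫ x in L..(L + T), (g x - p x)) l (𝓝 0) := by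
    rw [Metric.tendsto_nhds]
    intro ε hε
    have hs : ∀ᶠ x in l, ‖g x - p x‖ < ε / (2 * T) := by
      have := Metric.tendsto_nhds.1 hg.tendsto (ε / (2 * T)) (by positivity)
      simpa only [dist_zero_right] using this
    filter_upwards [hl _ hs] with L hL
    rw [dist_zero_right]
    have hle : ‖∫ x in L..(L + T), (g x - p x)‖ ≤ ε / (2 * T) * |L + T - L| := by
      apply intervalIntegral.norm_integral_le_of_norm_le_const
      intro x hx
      rw [Set.uIoc_of_le (by linarith)] at hx
      exact le_of_lt (hL ⟨hx.1.le, hx.2⟩)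
    rw [add_sub_cancel_left, abs_of_pos hT] at hle
    have : ε / (2 * T) * T = ε / 2 := by field_simp
    linarith
  have key : ∀ L, H (L + T) - H L + ∫ x in L..(L + T), (g x - p x)
      = C * T - ∫ x in (0 : ℝ)..T, p x := by
    intro L
    have h1 : ∫ x in L..(L + T), (C - g x) = H (L + T) - H L :=
      intervalIntegral.integral_eq_sub_of_hasDerivAt (fun x _ => hder x)
        ((continuous_const.sub hgc).intervalIntegrable _ _)
    have h2 : ∫ x in L..(L + T), p x = ∫ x in (0 : ℝ)..T, p x := by
      simpa using hg.periodic.intervalIntegral_add_eq L 0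
    rw [intervalIntegral.integral_sub (by simp) (hgc.intervalIntegrable _ _)] at h1
    rw [intervalIntegral.integral_sub (hgc.intervalIntegrable _ _)
      (hg.cont.intervalIntegrable _ _), h2, ← h1]
    simp
    ring
  have h := hbdry.add hint
  simp only [key, add_zero] at h
  linarith [tendsto_nhds_unique h tendsto_const_nhds]

end AsympPeriodic

lemma iteratedDeriv_comp_affine {φ : ℝ → ℝ} {j : ℕ} (hφ : ContDiff ℝ j φ) (k θ : ℝ) :
    iteratedDeriv j (fun x => φ (k * x - θ)) = fun x => k ^ j * iteratedDeriv j φ (k * x - θ) := by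
  have h1 : ContDiff ℝ j (fun z => φ (z - θ)) := hφ.comp (contDiff_id.sub contDiff_const)
  rw [iteratedDeriv_comp_const_mul h1 k, iteratedDeriv_comp_sub_const]

lemma periodic_iteratedDeriv {φ : ℝ → ℝ} {T : ℝ} (h : Function.Periodic φ T) (j : ℕ) :
    Function.Periodic (iteratedDeriv j φ) T := by
  intro x
  have h2 : (fun z => φ (z + T)) = φ := funext h
  have h1 := congrFun (iteratedDeriv_comp_add_const j φ T) x
  rw [h2] at h1
  exact h1.symm

lemma periodic_comp_affine {q : ℝ → ℝ} {k : ℝ} (hk : 0 < k)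
    (hq : Function.Periodic q (2 * Real.pi)) (θ : ℝ) :
    Function.Periodic (fun x => q (k * x - θ)) (2 * Real.pi / k) := by
  intro x
  have : k * (x + 2 * Real.pi / k) - θ = (k * x - θ) + 2 * Real.pi := by
    field_simp
    ring
  simp only [this, hq (k * x - θ)]

lemma integral_comp_affine {q : ℝ → ℝ} {k : ℝ} (hk : 0 < k)
    (hq : Function.Periodic q (2 * Real.pi)) (θ : ℝ) :
    ∫ x in (0 : ℝ)..(2 * Real.pi / k), q (k * x - θ)
      = k⁻¹ * ∫ x in (0 : ℝ)..(2 * Real.pi), q x := by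
  rw [intervalIntegral.integral_comp_mul_sub _ hk.ne', smul_eq_mul]
  have h1 : k * (2 * Real.pi / k) - θ = (k * 0 - θ) + 2 * Real.pi := by
    field_simp
    ring
  rw [h1, hq.intervalIntegral_add_eq (k * 0 - θ) 0, zero_add]

/-- Here `f₁, f₂, f₃` are the first three derivatives of `f`, and `A`, `B` are the values of the two
first integrals, each written as an exact derivative equal to a constant minus a density. The far
field `φ (k * x - θ)` of `f` along `l` determines `A` and `B` as period averages. -/
lemma averages_of_farField {l : Filter ℝ} [l.NeBot] {c k θ A B : ℝ} (hk : 0 < k)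
    (hl : ∀ s ∈ l, ∀ᶠ L in l, Set.Icc L (L + 2 * Real.pi / k) ⊆ s)
    {f f₁ f₂ f₃ φ : ℝ → ℝ} (hφ : ContDiff ℝ 4 φ) (hper : Function.Periodic φ (2 * Real.pi))
    (cf : Continuous f) (cf₂ : Continuous f₂)
    (h3 : ∀ x, HasDerivAt f₃ (A - (-c * f x + 1 / 2 * (f x * f x))) x)
    (hB : ∀ x, HasDerivAt (fun x => f x * f₃ x + -2 * (f₁ x * f₂ x))
      (B - (-(c / 2) * (f x * f x) + (1 / 3 * (f x * (f x * f x)) + 5 / 2 * (f₂ x * f₂ x)))) x)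
    (hlim : ∀ j : ℕ, j ≤ 3 → Tendsto (fun x => (![f, f₁, f₂, f₃] : Fin 4 → ℝ → ℝ) (Fin.ofNat 4 j) x
      - iteratedDeriv j (fun x => φ (k * x - θ)) x) l (𝓝 0)) :
    A * (2 * Real.pi) = -c * (∫ x in (0 : ℝ)..(2 * Real.pi), φ x)
        + 1 / 2 * ∫ x in (0 : ℝ)..(2 * Real.pi), φ x ^ 2 ∧
    B * (2 * Real.pi) = -(c / 2) * (∫ x in (0 : ℝ)..(2 * Real.pi), φ x ^ 2)
        + (1 / 3 * (∫ x in (0 : ℝ)..(2 * Real.pi), φ x ^ 3)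
        + 5 / 2 * (k ^ 4 * ∫ x in (0 : ℝ)..(2 * Real.pi), iteratedDeriv 2 φ x ^ 2)) := by
  have hT : 0 < 2 * Real.pi / k := by positivity
  have asymp : ∀ j : ℕ, j ≤ 3 → AsympPeriodic (2 * Real.pi / k) l
      ((![f, f₁, f₂, f₃] : Fin 4 → ℝ → ℝ) (Fin.ofNat 4 j))
      (fun x => k ^ j * iteratedDeriv j φ (k * x - θ)) := by
    intro j hj
    have hφj : ContDiff ℝ j φ := hφ.of_le (by exact_mod_cast (by omega : j ≤ 4))
    refine ⟨?_, ?_, ?_⟩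
    · exact continuous_const.mul ((hφj.continuous_iteratedDeriv' j).comp (by fun_prop))
    · intro x
      have := periodic_comp_affine hk (periodic_iteratedDeriv hper j) θ x
      simp only at this ⊢
      rw [this]
    · simpa only [iteratedDeriv_comp_affine hφj] using hlim j hj
  have a0 : AsympPeriodic (2 * Real.pi / k) l f (fun x => φ (k * x - θ)) := by
    simpa using asymp 0 (by norm_num)
  have a1 := asymp 1 (by norm_num)
  have a2 := asymp 2 (by norm_num)
  have a3 := asymp 3 (by norm_num)
  change AsympPeriodic _ _ f₁ _ at a1
  change AsympPeriodic _ _ f₂ _ at a2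
  change AsympPeriodic _ _ f₃ _ at a3
  have cφ : Continuous φ := hφ.continuous
  have cφ₂ : Continuous (iteratedDeriv 2 φ) :=
    hφ.continuous_iteratedDeriv 2 (by norm_num)
  have pφ₂ := periodic_iteratedDeriv hper 2
  have ff := a0.mul hT.ne' a0
  constructor
  · have key := AsympPeriodic.const_eq_mean hT hl a3
      ((a0.const_mul (-c)).add (ff.const_mul (1 / 2))) (by fun_prop) h3
    have hcv := integral_comp_affine (q := fun y => -c * φ y + 1 / 2 * (φ y * φ y)) hk
      (fun y => by simp only [hper y]) θ
    rw [hcv, intervalIntegral.integral_add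
      (Continuous.intervalIntegrable (by fun_prop) _ _)
      (Continuous.intervalIntegrable (by fun_prop) _ _),
      intervalIntegral.integral_const_mul, intervalIntegral.integral_const_mul] at key
    field_simp at key
    linarith
  · have key := AsympPeriodic.const_eq_mean hT hl
      ((a0.mul hT.ne' a3).add ((a1.mul hT.ne' a2).const_mul (-2)))
      ((ff.const_mul (-(c / 2))).add (((a0.mul hT.ne' ff).const_mul (1 / 3)).add
        ((a2.mul hT.ne' a2).const_mul (5 / 2)))) (by fun_prop) hB
    have hcv := integral_comp_affine
      (q := fun y => -(c / 2) * (φ y * φ y) + (1 / 3 * (φ y * (φ y * φ y))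
        + 5 / 2 * (k ^ 2 * iteratedDeriv 2 φ y * (k ^ 2 * iteratedDeriv 2 φ y)))) hk
      (fun y => by simp only [hper y, pφ₂ y]) θ
    have hsplit : ∫ y in (0 : ℝ)..(2 * Real.pi), (-(c / 2) * (φ y * φ y)
        + (1 / 3 * (φ y * (φ y * φ y))
        + 5 / 2 * (k ^ 2 * iteratedDeriv 2 φ y * (k ^ 2 * iteratedDeriv 2 φ y))))
      = -(c / 2) * (∫ x in (0 : ℝ)..(2 * Real.pi), φ x ^ 2)
        + (1 / 3 * (∫ x in (0 : ℝ)..(2 * Real.pi), φ x ^ 3)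
        + 5 / 2 * (k ^ 4 * ∫ x in (0 : ℝ)..(2 * Real.pi), iteratedDeriv 2 φ x ^ 2)) := by
      simp only [← intervalIntegral.integral_const_mul]
      rw [← intervalIntegral.integral_add
        (Continuous.intervalIntegrable (by fun_prop) _ _)
        (Continuous.intervalIntegrable (by fun_prop) _ _),
        ← intervalIntegral.integral_add
        (Continuous.intervalIntegrable (by fun_prop) _ _)
        (Continuous.intervalIntegrable (by fun_prop) _ _)]
      congr 1
      funext y
      ring
    rw [← hsplit]
    rw [hcv] at key
    generalize (∫ y in (0 : ℝ)..(2 * Real.pi), (-(c / 2) * (φ y * φ y)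
        + (1 / 3 * (φ y * (φ y * φ y))
        + 5 / 2 * (k ^ 2 * iteratedDeriv 2 φ y * (k ^ 2 * iteratedDeriv 2 φ y))))) = I at key ⊢
    field_simp at key
    linarith

/-- Main theorem: a C⁵ traveling-wave profile `f` of the KdV5 equation with speed `c`
that asymptotes (together with its derivatives up to order 3) to the periodic waves
`ξ ↦ φ₋(k₋ ξ - θ₋)` as `ξ → -∞` and `ξ ↦ φ₊(k₊ ξ - θ₊)` as `ξ → +∞` has far fields
satisfying the Rankine–Hugoniot jump conditions of the KdV5-Whitham modulation
equations with shock speed `V = c`. Here `km, θm, φm` (resp. `kp, θp, φp`) denote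
`k₋, θ₋, φ₋` (resp. `k₊, θ₊, φ₊`), and the period average of a 2π-periodic `g` is
`avg g = (1/(2π)) ∫₀^{2π} g`. -/
theorem stmt0 (c km kp θm θp : ℝ) (hkm : 0 < km) (hkp : 0 < kp)
    (f φm φp : ℝ → ℝ)
    (hf : ContDiff ℝ 5 f)
    (hode : ∀ ξ : ℝ, -c * deriv f ξ + f ξ * deriv f ξ + iteratedDeriv 5 f ξ = 0)
    (hφm : ContDiff ℝ 4 φm) (hφp : ContDiff ℝ 4 φp)
    (hpm : Function.Periodic φm (2 * Real.pi))
    (hpp : Function.Periodic φp (2 * Real.pi))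
    (hlimm : ∀ j : ℕ, j ≤ 3 →
      Filter.Tendsto
        (fun ξ : ℝ => iteratedDeriv j f ξ
          - iteratedDeriv j (fun x => φm (km * x - θm)) ξ)
        Filter.atBot (nhds 0))
    (hlimp : ∀ j : ℕ, j ≤ 3 →
      Filter.Tendsto
        (fun ξ : ℝ => iteratedDeriv j f ξ
          - iteratedDeriv j (fun x => φp (kp * x - θp)) ξ)
        Filter.atTop (nhds 0)) :
    let avg : (ℝ → ℝ) → ℝ := fun g => (1/(2 * Real.pi)) * ∫ θ in (0:ℝ)..(2 * Real.pi), g θ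
    -- (i) jump of mass
    (-c * (avg φm - avg φp)
        + (1/2) * (avg (fun θ => φm θ ^ 2) - avg (fun θ => φp θ ^ 2)) = 0) ∧
    -- (ii) jump of momentum
    (-(c/2) * (avg (fun θ => φm θ ^ 2) - avg (fun θ => φp θ ^ 2))
        + (1/3) * (avg (fun θ => φm θ ^ 3) - avg (fun θ => φp θ ^ 3))
        + (5/2) * (km ^ 4 * avg (fun θ => (iteratedDeriv 2 φm θ) ^ 2)
            - kp ^ 4 * avg (fun θ => (iteratedDeriv 2 φp θ) ^ 2)) = 0) ∧
    -- (iii) conservation of waves (with V = c and phase speeds c₋ = c₊ = c)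
    (-c * (km - kp) + (c * km - c * kp) = 0) := by
  intro avg
  have hd : ∀ j : ℕ, j < 5 → ∀ x, HasDerivAt (iteratedDeriv j f) (iteratedDeriv (j + 1) f x) x := by
    intro j hj x
    rw [iteratedDeriv_succ]
    exact (hf.differentiable_iteratedDeriv j (by exact_mod_cast hj) x).hasDerivAt
  have d0 : ∀ x, HasDerivAt f (iteratedDeriv 1 f x) x := by
    simpa only [iteratedDeriv_zero] using hd 0 (by norm_num)
  have d1 : ∀ x, HasDerivAt (iteratedDeriv 1 f) (iteratedDeriv 2 f x) x := hd 1 (by norm_num)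
  have d2 : ∀ x, HasDerivAt (iteratedDeriv 2 f) (iteratedDeriv 3 f x) x := hd 2 (by norm_num)
  have d3 : ∀ x, HasDerivAt (iteratedDeriv 3 f) (iteratedDeriv 4 f x) x := hd 3 (by norm_num)
  have d4 : ∀ x, HasDerivAt (iteratedDeriv 4 f) (iteratedDeriv 5 f x) x := hd 4 (by norm_num)
  simp only [← iteratedDeriv_one] at hode
  -- The first integral obtained by integrating the profile equation once.
  obtain ⟨A, hA⟩ : ∃ A, ∀ x, iteratedDeriv 4 f x + -c * f x + 1 / 2 * (f x * f x) = A := by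
    have hder : ∀ x, HasDerivAt
        (fun x => iteratedDeriv 4 f x + -c * f x + 1 / 2 * (f x * f x)) 0 x := by
      intro x
      refine (((d4 x).add ((d0 x).const_mul (-c))).add
        (((d0 x).mul (d0 x)).const_mul (1 / 2))).congr_deriv ?_
      linarith [hode x]
    exact ⟨_, fun x => is_const_of_deriv_eq_zero (fun y => (hder y).differentiableAt)
      (fun y => (hder y).deriv) x 0⟩
  -- The first integral obtained by multiplying the profile equation by `f` and integrating.
  obtain ⟨B, hB⟩ : ∃ B, ∀ x, -(c / 2) * (f x * f x) + 1 / 3 * (f x * (f x * f x))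
      + f x * iteratedDeriv 4 f x - iteratedDeriv 1 f x * iteratedDeriv 3 f x
      + 1 / 2 * (iteratedDeriv 2 f x * iteratedDeriv 2 f x) = B := by
    have hder : ∀ x, HasDerivAt (fun x => -(c / 2) * (f x * f x) + 1 / 3 * (f x * (f x * f x))
        + f x * iteratedDeriv 4 f x - iteratedDeriv 1 f x * iteratedDeriv 3 f x
        + 1 / 2 * (iteratedDeriv 2 f x * iteratedDeriv 2 f x)) 0 x := by
      intro x
      refine (((((((d0 x).mul (d0 x)).const_mul (-(c / 2))).add
        (((d0 x).mul ((d0 x).mul (d0 x))).const_mul (1 / 3))).add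
        ((d0 x).mul (d4 x))).sub ((d1 x).mul (d3 x))).add
        (((d2 x).mul (d2 x)).const_mul (1 / 2))).congr_deriv ?_
      simp only [Pi.mul_apply]
      linear_combination f x * hode x
    exact ⟨_, fun x => is_const_of_deriv_eq_zero (fun y => (hder y).differentiableAt)
      (fun y => (hder y).deriv) x 0⟩
  have h3 : ∀ x, HasDerivAt (iteratedDeriv 3 f) (A - (-c * f x + 1 / 2 * (f x * f x))) x :=
    fun x => (d3 x).congr_deriv (by linarith [hA x])
  have hG : ∀ x, HasDerivAt
      (fun x => f x * iteratedDeriv 3 f x + -2 * (iteratedDeriv 1 f x * iteratedDeriv 2 f x))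
      (B - (-(c / 2) * (f x * f x) + (1 / 3 * (f x * (f x * f x))
        + 5 / 2 * (iteratedDeriv 2 f x * iteratedDeriv 2 f x)))) x := by
    intro x
    refine (((d0 x).mul (d3 x)).add (((d1 x).mul (d2 x)).const_mul (-2))).congr_deriv ?_
    linarith [hB x]
  have hvec : ∀ j : ℕ, j ≤ 3 →
      (![f, iteratedDeriv 1 f, iteratedDeriv 2 f, iteratedDeriv 3 f] : Fin 4 → ℝ → ℝ)
        (Fin.ofNat 4 j) = iteratedDeriv j f := by
    intro j hj
    interval_cases j
    · exact iteratedDeriv_zero.symm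
    all_goals rfl
  have cf₂ : Continuous (iteratedDeriv 2 f) := hf.continuous_iteratedDeriv 2 (by norm_num)
  obtain ⟨hAm, hBm⟩ := averages_of_farField (l := atBot) hkm
    (fun s hs => by
      obtain ⟨N, hN⟩ := mem_atBot_sets.1 hs
      filter_upwards [eventually_le_atBot (N - 2 * Real.pi / km)] with L hL x hx
      exact hN x (by linarith [hx.2]))
    hφm hpm hf.continuous cf₂ h3 hG (fun j hj => by rw [hvec j hj]; exact hlimm j hj)
  obtain ⟨hAp, hBp⟩ := averages_of_farField (l := atTop) hkp
    (fun s hs => by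
      obtain ⟨N, hN⟩ := mem_atTop_sets.1 hs
      filter_upwards [eventually_ge_atTop N] with L hL x hx
      exact hN x (by linarith [hx.1]))
    hφp hpp hf.continuous cf₂ h3 hG (fun j hj => by rw [hvec j hj]; exact hlimp j hj)
  refine ⟨?_, ?_, by ring⟩
  · simp only [avg]
    linear_combination (1 / (2 * Real.pi)) * (hAp - hAm)
  · simp only [avg]
    linear_combination (1 / (2 * Real.pi)) * (hBp - hBm)
end

section
/- Let c, A ∈ ℝ, k > 0, and let φ : ℝ → ℝ be a 2π-periodic C⁴ function satisfying k⁴ φ''''(θ) + (1/2) φ(θ)² − c φ(θ) − A/2 = 0 for all θ ∈ ℝ. Then the quantity k⁴ φ'''(θ) φ'(θ) − (k⁴/2)(φ''(θ))² + (1/6) φ(θ)³ − (c/2) φ(θ)² − (A/2) φ(θ) is equal to a constant −B independent of θ, and this constant satisfies (c/2) · (period average of φ²) − (1/3) · (period average of φ³) − (5/2) k⁴ · (period average of (φ'')²) = −B. -/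
/-!
The quantity in the first claim is a first integral: its derivative is `φ'` times the left-hand
side of the ODE, so it is constant. Subtracting `φ` times the ODE from it gives, pointwise,
`-B = k⁴ (2 φ'' φ' - φ''' φ)' - (5/2) k⁴ (φ'')² - (1/3) φ³ + (c/2) φ²`,
and the exact derivative integrates to zero over a period.
-/

/-- For a 2π-periodic C⁴ solution `φ` of `k⁴ φ'''' + (1/2) φ² - c φ - A/2 = 0`, the
quantity `k⁴ φ''' φ' - (k⁴/2)(φ'')² + (1/6) φ³ - (c/2) φ² - (A/2) φ` equals a constant
`-B`, and `(c/2)⟨φ²⟩ - (1/3)⟨φ³⟩ - (5/2) k⁴ ⟨(φ'')²⟩ = -B`. -/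
theorem stmt6 (c A k : ℝ) (hk : 0 < k) (φ : ℝ → ℝ) (hφ : ContDiff ℝ 4 φ)
    (hper : Function.Periodic φ (2 * Real.pi))
    (hode : ∀ θ : ℝ,
      k ^ 4 * iteratedDeriv 4 φ θ + (1/2) * φ θ ^ 2 - c * φ θ - A/2 = 0) :
    ∃ B : ℝ,
      (∀ θ : ℝ,
        k ^ 4 * iteratedDeriv 3 φ θ * deriv φ θ
          - (k ^ 4 / 2) * (iteratedDeriv 2 φ θ) ^ 2
          + (1/6) * φ θ ^ 3 - (c/2) * φ θ ^ 2 - (A/2) * φ θ = -B) ∧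
      (c/2) * ((1/(2 * Real.pi)) * ∫ θ in (0:ℝ)..(2 * Real.pi), φ θ ^ 2)
        - (1/3) * ((1/(2 * Real.pi)) * ∫ θ in (0:ℝ)..(2 * Real.pi), φ θ ^ 3)
        - (5/2) * k ^ 4 *
            ((1/(2 * Real.pi)) * ∫ θ in (0:ℝ)..(2 * Real.pi), (iteratedDeriv 2 φ θ) ^ 2)
        = -B := by
  have hd : ∀ n : ℕ, n < 4 → ∀ θ,
      HasDerivAt (iteratedDeriv n φ) (iteratedDeriv (n + 1) φ θ) θ := by
    intro n hn θ
    rw [iteratedDeriv_succ]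
    exact (hφ.differentiable_iteratedDeriv n (by exact_mod_cast hn) θ).hasDerivAt
  have h0 : ∀ θ, HasDerivAt φ (deriv φ θ) θ := by
    simpa [iteratedDeriv_one] using hd 0 (by norm_num)
  have h1 : ∀ θ, HasDerivAt (deriv φ) (iteratedDeriv 2 φ θ) θ := by
    simpa [iteratedDeriv_one] using hd 1 (by norm_num)
  have h2 : ∀ θ, HasDerivAt (iteratedDeriv 2 φ) (iteratedDeriv 3 φ θ) θ := hd 2 (by norm_num)
  have h3 : ∀ θ, HasDerivAt (iteratedDeriv 3 φ) (iteratedDeriv 4 φ θ) θ := hd 3 (by norm_num)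
  have hp : ∀ n : ℕ, iteratedDeriv n φ (2 * Real.pi) = iteratedDeriv n φ 0 := by
    intro n
    have h := congrFun (iteratedDeriv_comp_add_const n φ (2 * Real.pi)) 0
    rw [show (fun z => φ (z + 2 * Real.pi)) = φ from funext hper] at h
    simpa using h.symm
  have hp0 : φ (2 * Real.pi) = φ 0 := by simpa using hp 0
  have hp1 : deriv φ (2 * Real.pi) = deriv φ 0 := by simpa [iteratedDeriv_one] using hp 1
  set E : ℝ → ℝ := fun θ => k ^ 4 * iteratedDeriv 3 φ θ * deriv φ θ
          - (k ^ 4 / 2) * (iteratedDeriv 2 φ θ) ^ 2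
          + (1/6) * φ θ ^ 3 - (c/2) * φ θ ^ 2 - (A/2) * φ θ with hE
  have hE' : ∀ θ, HasDerivAt E 0 θ := by
    intro θ
    have h := (((((h3 θ).const_mul (k ^ 4)).mul (h1 θ)).sub
      (((h2 θ).pow 2).const_mul (k ^ 4 / 2))).add (((h0 θ).pow 3).const_mul (1/6))).sub
      (((h0 θ).pow 2).const_mul (c/2)) |>.sub ((h0 θ).const_mul (A/2))
    refine h.congr_deriv ?_
    simp only [Nat.cast_ofNat, Nat.add_one_sub_one, pow_one]
    linear_combination (deriv φ θ) * hode θ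
  have hconst : ∀ θ, E θ = E 0 := fun θ =>
    is_const_of_deriv_eq_zero (fun x => (hE' x).differentiableAt) (fun x => (hE' x).deriv) θ 0
  refine ⟨-E 0, fun θ => by rw [neg_neg]; exact hconst θ, ?_⟩
  have c0 : Continuous φ := hφ.continuous
  have c2 : Continuous (iteratedDeriv 2 φ) :=
    continuous_iff_continuousAt.2 fun θ => (h2 θ).continuousAt
  have hF : ∀ θ, HasDerivAt
      (fun θ => k ^ 4 * (2 * iteratedDeriv 2 φ θ * deriv φ θ - iteratedDeriv 3 φ θ * φ θ)
        - E 0 * θ)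
      ((5/2) * k ^ 4 * iteratedDeriv 2 φ θ ^ 2 + (1/3) * φ θ ^ 3 - (c/2) * φ θ ^ 2) θ := by
    intro θ
    have h := (((((h2 θ).const_mul 2).mul (h1 θ)).sub ((h3 θ).mul (h0 θ))).const_mul (k ^ 4)).sub
      ((hasDerivAt_id θ).const_mul (E 0))
    refine h.congr_deriv ?_
    have hc := hconst θ
    simp only [hE] at hc ⊢
    linear_combination hc - φ θ * hode θ
  have hint := intervalIntegral.integral_eq_sub_of_hasDerivAt (a := 0) (b := 2 * Real.pi)
    (fun θ _ => hF θ) (Continuous.intervalIntegrable (by fun_prop) _ _)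
  rw [intervalIntegral.integral_sub (Continuous.intervalIntegrable (by fun_prop) _ _)
      (Continuous.intervalIntegrable (by fun_prop) _ _),
    intervalIntegral.integral_add (Continuous.intervalIntegrable (by fun_prop) _ _)
      (Continuous.intervalIntegrable (by fun_prop) _ _)] at hint
  simp only [intervalIntegral.integral_const_mul, hp, hp0, hp1] at hint
  have hpi : (2 * Real.pi) ≠ 0 := by positivity
  have hinv : 1 / (2 * Real.pi) * (2 * Real.pi) = 1 := one_div_mul_cancel hpi
  rw [neg_neg]
  linear_combination (-(1 / (2 * Real.pi))) * hint + E 0 * hinv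
end

section
/- Fix ū ∈ ℝ and k > 0. For a > 0 define the truncated Stokes wave φ_a(θ) = ū + (a/2) cos θ − (a²/(240 k⁴)) cos 2θ and the Stokes phase speed c_a = ū + k⁴ − a²/(480 k⁴). Then there exists a constant C > 0 (depending only on ū and k) such that for all a ∈ (0,1] and all θ ∈ ℝ, the traveling-wave residual satisfies |−c_a φ_a'(θ) + φ_a(θ) φ_a'(θ) + k⁴ φ_a⁽⁵⁾(θ)| ≤ C a³; i.e., the Stokes approximation solves the profile equation up to errors of order a³. -/
/-!
Put `m = 1 / (240 k⁴)`, so that the second-harmonic coefficient is `m a²` and the speed correction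
is `m a² / 2`. Substituting the explicit derivatives of the profile, the terms of order `a` cancel
because the speed is `ū + k⁴` at leading order, and the terms of order `a²` cancel because
`30 k⁴ m = 1 / 8` and `sin θ cos θ = sin 2θ / 2`. What is left is
`a³ (m (-sin θ / 4 + cos θ sin 2θ + cos 2θ sin θ / 2) + m² a (sin 2θ - 2 cos 2θ sin 2θ))`,
and for `0 < a ≤ 1` the bracket is at most `2 m + 3 m²` in absolute value.
-/

/-- Trigonometric polynomials of degree two are closed under differentiation. This form can be
iterated, since the derivative is again an instance of the left-hand side. -/
lemma deriv_trigPoly (E A B C D : ℝ) :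
    deriv (fun t : ℝ => E + A * Real.cos t + B * Real.sin t
        + C * Real.cos (2 * t) + D * Real.sin (2 * t))
      = fun t : ℝ => 0 + B * Real.cos t + (-A) * Real.sin t
        + (2 * D) * Real.cos (2 * t) + (-2 * C) * Real.sin (2 * t) := by
  funext t
  have h2 : HasDerivAt (fun t : ℝ => 2 * t) 2 t := by
    simpa using (hasDerivAt_id t).const_mul (2 : ℝ)
  have h := (((((Real.hasDerivAt_cos t).const_mul A).const_add E).add
    ((Real.hasDerivAt_sin t).const_mul B)).add (h2.cos.const_mul C)).add (h2.sin.const_mul D)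
  refine (HasDerivAt.deriv (h.congr_deriv ?_))
  ring

/-- The truncated Stokes wave `φ_a(θ) = ū + (a/2) cos θ - (a²/(240 k⁴)) cos 2θ` with
phase speed `c_a = ū + k⁴ - a²/(480 k⁴)` solves the KdV5 profile equation
`-c φ' + φ φ' + k⁴ φ⁽⁵⁾ = 0` up to a residual of order `a³`, uniformly in `θ`. -/
theorem stmt14 (ub k : ℝ) (hk : 0 < k) :
    ∃ C : ℝ, 0 < C ∧ ∀ a : ℝ, 0 < a → a ≤ 1 → ∀ θ : ℝ,
      |(-(ub + k ^ 4 - a ^ 2 / (480 * k ^ 4)))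
          * deriv (fun t => ub + (a/2) * Real.cos t
              - (a ^ 2 / (240 * k ^ 4)) * Real.cos (2 * t)) θ
        + (ub + (a/2) * Real.cos θ - (a ^ 2 / (240 * k ^ 4)) * Real.cos (2 * θ))
          * deriv (fun t => ub + (a/2) * Real.cos t
              - (a ^ 2 / (240 * k ^ 4)) * Real.cos (2 * t)) θ
        + k ^ 4 * iteratedDeriv 5 (fun t => ub + (a/2) * Real.cos t
              - (a ^ 2 / (240 * k ^ 4)) * Real.cos (2 * t)) θ|
        ≤ C * a ^ 3 := by
  obtain ⟨m, hm⟩ : ∃ m : ℝ, m = 1 / (240 * k ^ 4) := ⟨_, rfl⟩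
  have hm0 : 0 < m := by rw [hm]; positivity
  have hkm : k ^ 4 * m = 1 / 240 := by rw [hm]; field_simp
  refine ⟨2 * m + 3 * m ^ 2, by positivity, fun a ha ha1 θ => ?_⟩
  have hb : a ^ 2 / (240 * k ^ 4) = m * a ^ 2 := by rw [hm]; ring
  have he : a ^ 2 / (480 * k ^ 4) = m * a ^ 2 / 2 := by rw [hm]; field_simp; norm_num
  have hf : (fun t : ℝ => ub + (a/2) * Real.cos t - (m * a ^ 2) * Real.cos (2 * t))
      = fun t : ℝ => ub + (a/2) * Real.cos t + 0 * Real.sin t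
        + (-(m * a ^ 2)) * Real.cos (2 * t) + 0 * Real.sin (2 * t) := by
    funext t; ring
  rw [hb, he, hf]
  simp only [iteratedDeriv_succ', iteratedDeriv_zero, deriv_trigPoly]
  have hs2 : Real.sin θ * Real.cos θ = Real.sin (2 * θ) / 2 := by
    rw [Real.sin_two_mul]; ring
  have h1 := Real.abs_sin_le_one θ
  have h2 := Real.abs_cos_le_one θ
  have h3 := Real.abs_sin_le_one (2 * θ)
  have h4 := Real.abs_cos_le_one (2 * θ)
  generalize Real.sin (2 * θ) = S at *
  generalize Real.cos (2 * θ) = K at *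
  generalize Real.sin θ = s at *
  generalize Real.cos θ = c at *
  have hcS : |c * S| ≤ 1 := by
    rw [abs_mul]; exact mul_le_one₀ h2 (abs_nonneg _) h3
  have hKs : |K * s| ≤ 1 := by
    rw [abs_mul]; exact mul_le_one₀ h4 (abs_nonneg _) h1
  have hKS : |K * S| ≤ 1 := by
    rw [abs_mul]; exact mul_le_one₀ h4 (abs_nonneg _) h3
  rw [abs_le] at h1 h3 hcS hKs hKS
  have hP : |-s / 4 + c * S + K * s / 2| ≤ 2 := by
    rw [abs_le]; constructor <;> linarith
  have hQ : |S - 2 * (K * S)| ≤ 3 := by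
    rw [abs_le]; constructor <;> linarith
  have hR : |m * (-s / 4 + c * S + K * s / 2) + m ^ 2 * (a * (S - 2 * (K * S)))|
      ≤ 2 * m + 3 * m ^ 2 := by
    refine (abs_add_le _ _).trans (add_le_add ?_ ?_)
    · rw [abs_mul, abs_of_pos hm0, mul_comm]
      gcongr
    · rw [abs_mul, abs_mul a, abs_of_pos ha, abs_of_pos (pow_pos hm0 2), mul_comm]
      gcongr
      exact (mul_le_of_le_one_left (abs_nonneg _) ha1).trans hQ
  have ha3 : 0 < a ^ 3 := by positivity
  calc _ = |(m * (-s / 4 + c * S + K * s / 2) + m ^ 2 * (a * (S - 2 * (K * S)))) * a ^ 3| := by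
        congr 1
        -- The order-`a²` cancellation uses `hkm` and `hs2`; the rest is polynomial identity.
        linear_combination (30 * a ^ 2 * S) * hkm - (a ^ 2 / 4) * hs2
    _ ≤ (2 * m + 3 * m ^ 2) * a ^ 3 := by
        rw [abs_mul, abs_of_pos ha3]
        gcongr
end

section
/- Let ū ≠ 0, V ∈ ℝ and κ > 0 satisfy the weakly nonlinear solitary-wave-to-periodic jump conditions: (i) −V ū + ū²/2 − 1/16 = 0; (ii) −(V/2)(ū² − 1/8) + ū³/3 − (5/16) κ = 0; (iii) V = κ − 1/(480 κ). Then V = ū/2 − 1/(16 ū), κ = (4ū³ + 3ū)/15 − 1/(80 ū), and ū² is a root of the quartic polynomial 1024 y⁴ − 384 y³ − 720 y² + 168 y − 9 = 0. -/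
/-!
Conditions (i) and (ii) determine `V * ub` and `κ * ub` as polynomials in `ub ^ 2`. Condition
(iii), cleared of its denominator and multiplied by `ub ^ 2`, is a polynomial relation between
these two products and `ub ^ 2`; substituting gives four times the quartic.
-/

/-- Solving the weakly nonlinear solitary-wave-to-periodic jump conditions of the
KdV5-Whitham equations: if `ū ≠ 0`, `κ > 0` satisfy (i) `-V ū + ū²/2 - 1/16 = 0`,
(ii) `-(V/2)(ū² - 1/8) + ū³/3 - (5/16) κ = 0`, (iii) `V = κ - 1/(480 κ)`, then
`V = ū/2 - 1/(16 ū)`, `κ = (4ū³ + 3ū)/15 - 1/(80 ū)`, and `ū²` is a root of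
`1024 y⁴ - 384 y³ - 720 y² + 168 y - 9`. -/
theorem stmt16 (ub V κ : ℝ) (hub : ub ≠ 0) (hκ : 0 < κ)
    (h1 : -V * ub + ub ^ 2 / 2 - 1/16 = 0)
    (h2 : -(V/2) * (ub ^ 2 - 1/8) + ub ^ 3 / 3 - (5/16) * κ = 0)
    (h3 : V = κ - 1/(480 * κ)) :
    V = ub/2 - 1/(16 * ub) ∧
    κ = (4 * ub ^ 3 + 3 * ub)/15 - 1/(80 * ub) ∧
    1024 * (ub ^ 2) ^ 4 - 384 * (ub ^ 2) ^ 3 - 720 * (ub ^ 2) ^ 2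
      + 168 * (ub ^ 2) - 9 = 0 := by
  have hV : 16 * V * ub = 8 * ub ^ 2 - 1 := by linear_combination -16 * h1
  -- Eliminating `V` from `ub * (ii)` by means of (i).
  have hK : 240 * κ * ub = 64 * ub ^ 4 + 48 * ub ^ 2 - 3 := by
    linear_combination -768 * ub * h2 + 384 * (ub ^ 2 - 1/8) * h1
  have hP : 480 * κ * V = 480 * κ ^ 2 - 1 := by
    rw [h3]
    field_simp
  refine ⟨?_, ?_, ?_⟩
  · field_simp
    linear_combination 2 * hV
  · field_simp
    linear_combination 5 * hK
  · -- Multiplying `hP` by `120 * ub ^ 2` makes `κ` and `V` occur only through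
    -- `κ * ub` and `V * ub`, which are polynomials in `ub ^ 2`.
    have hQ : (64 * ub ^ 4 + 48 * ub ^ 2 - 3) ^ 2
        - 15 * (64 * ub ^ 4 + 48 * ub ^ 2 - 3) * (8 * ub ^ 2 - 1) - 120 * ub ^ 2 = 0 := by
      rw [← hK, ← hV]
      linear_combination -120 * ub ^ 2 * hP
    linear_combination hQ / 4
end
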